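/- Let f : ℝⁿ → ℝ be continuous and positive-valued with epigraph L, and let K ⊆ ℝⁿ × ℝ be a nonempty closed set disjoint from L containing a point (x₀,y₀) with y₀ ≤ 0. Fix x ∈ ℝⁿ and suppose there is exactly one G(x) ∈ ℝ with d((x,G(x)),K) = d((x,G(x)),L). Then for every y ∈ ℝ: d((x,y),K) < d((x,y),L) implies y < G(x), and d((x,y),K) > d((x,y),L) implies y > G(x). -/

import Mathlib

open Metric Set

noncomputable section

/-- `ℝⁿ × ℝ` with the Euclidean (ℓ²) metric. -/
abbrev EucProd (n : ℕ) := WithLp 2 (EuclideanSpace ℝ (Fin n) × ℝ)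

/-- The point of `ℝⁿ × ℝ` with first component `x` and last coordinate `y`. -/
def pt {n : ℕ} (x : EuclideanSpace ℝ (Fin n)) (y : ℝ) : EucProd n :=
  (WithLp.equiv 2 (EuclideanSpace ℝ (Fin n) × ℝ)).symm (x, y)

/-- The epigraph of `f : ℝⁿ → ℝ`, viewed as a subset of `ℝⁿ × ℝ`. -/
def epigraph {n : ℕ} (f : EuclideanSpace ℝ (Fin n) → ℝ) : Set (EucProd n) :=
  {p | f ((WithLp.equiv 2 (EuclideanSpace ℝ (Fin n) × ℝ)) p).1 ≤
      ((WithLp.equiv 2 (EuclideanSpace ℝ (Fin n) × ℝ)) p).2}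

/-!
Follow the vertical line over `x`. Both distances are continuous in the height `y`, so on each side
of the only height at which they agree, their difference has constant sign. High up the line lies
in the epigraph `L`, so `L` is at least as close as `K`. Far down `K` is strictly closer: with `c`
the height of the given point of `K`, and `R` larger than its horizontal distance to `x`,
lower semicontinuity and compactness give `b > c` bounding `L` from below over the ball of radius
`R` about `x`. Take the ball about `(x, y)` whose boundary meets height `c` at horizontal distance
`R`. It flattens as `y → -∞`, so its part above height `c`, which lies over the ball of radius `R`,
is eventually below height `b`. Its interior then misses `L` but contains the point of `K`.
-/

open Filter WithLp

section Order

variable {X β : Type*} [TopologicalSpace X] [LinearOrder β]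

theorem exists_gt_forall_le_of_lowerSemicontinuousOn [NoMaxOrder β] {f : X → β} {s : Set X}
    (hs : IsCompact s) (hf : LowerSemicontinuousOn f s) {c : β} (hc : ∀ z ∈ s, c < f z) :
    ∃ b > c, ∀ z ∈ s, b ≤ f z := by
  rcases s.eq_empty_or_nonempty with rfl | hne
  · exact (exists_gt c).imp fun b hb => ⟨hb, fun z hz => hz.elim⟩
  · obtain ⟨m, hm, hmin⟩ := hf.exists_isMinOn hne hs
    exact ⟨f m, hc m hm, fun z hz => hmin hz⟩

variable [TopologicalSpace β] [OrderClosedTopology β]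

theorem lt_of_isPreconnected_of_forall_ne {s : Set X} (hs : IsPreconnected s) {g h : X → β}
    (hg : ContinuousOn g s) (hh : ContinuousOn h s) (hne : ∀ z ∈ s, g z ≠ h z)
    {a b : X} (ha : a ∈ s) (hab : g a ≤ h a) (hb : b ∈ s) : g b < h b := by
  by_contra! hba
  obtain ⟨z, hz, heq⟩ := hs.intermediate_value₂ ha hb hg hh hab hba
  exact hne z hz heq

theorem lt_iff_lt_and_lt_iff_lt_of_forall_eq_iff [ConditionallyCompleteLinearOrder X]
    [OrderTopology X] [DenselyOrdered X] {g h : X → β} (hg : Continuous g) (hh : Continuous h)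
    {a : X} (heq : ∀ z, g z = h z ↔ z = a) (hlow : ∃ z < a, g z ≤ h z)
    (hhigh : ∃ z > a, h z ≤ g z) (y : X) : (g y < h y ↔ y < a) ∧ (h y < g y ↔ a < y) := by
  obtain ⟨u, hua, hu⟩ := hlow
  obtain ⟨v, hav, hv⟩ := hhigh
  have below : y < a → g y < h y := lt_of_isPreconnected_of_forall_ne isPreconnected_Iio
    hg.continuousOn hh.continuousOn (fun z hz => mt (heq z).1 (ne_of_lt hz)) hua hu
  have above : a < y → h y < g y := lt_of_isPreconnected_of_forall_ne isPreconnected_Ioi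
    hh.continuousOn hg.continuousOn (fun z hz => Ne.symm (mt (heq z).1 (ne_of_gt hz))) hav hv
  rcases lt_trichotomy y a with hy | hy | hy
  · simp only [below hy, hy, (below hy).not_gt, hy.not_gt, and_self]
  · simp only [(heq y).2 hy, lt_self_iff_false, hy.not_lt, hy.not_gt, and_self]
  · simp only [above hy, hy, (above hy).not_gt, hy.not_gt, and_self]

end Order

section Epigraph

variable {E : Type*}

/-- The epigraph of `f : E → ℝ` in the `ℓ²` product of `E` and `ℝ`. It unfolds to `epigraph f` when
`E` is a Euclidean space, and lets the argument run over other base spaces. -/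
def l2Epigraph (f : E → ℝ) : Set (WithLp 2 (E × ℝ)) :=
  {p | f p.fst ≤ p.snd}

theorem toLp_mem_l2Epigraph {f : E → ℝ} {x : E} {y : ℝ} :
    toLp 2 (x, y) ∈ l2Epigraph f ↔ f x ≤ y :=
  Iff.rfl

end Epigraph

section VerticalLine

variable {E : Type*} [PseudoMetricSpace E]

theorem dist_sq_eq_of_L2 (p q : WithLp 2 (E × ℝ)) :
    dist p q ^ 2 = dist p.fst q.fst ^ 2 + (p.snd - q.snd) ^ 2 := by
  have hdist := prod_dist_eq_add (p := 2) (by norm_num) p q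
  simp only [ENNReal.toReal_ofNat, Real.rpow_ofNat, ← Real.sqrt_eq_rpow] at hdist
  rw [hdist, Real.sq_sqrt (by positivity), Real.dist_eq, sq_abs]

theorem continuous_infDist_toLp (S : Set (WithLp 2 (E × ℝ))) (x : E) :
    Continuous fun y : ℝ => infDist (toLp 2 (x, y)) S :=
  (continuous_infDist_pt S).comp
    ((prod_continuous_toLp 2 E ℝ).comp (Continuous.prodMk_right x))

theorem sqrt_le_dist_of_le_snd {x : E} {y R b c : ℝ} {q : WithLp 2 (E × ℝ)} (hR : 0 ≤ R)
    (hyc : y ≤ c) (hcq : c ≤ q.snd) (hbq : dist x q.fst ≤ R → b ≤ q.snd) (hcb : c ≤ b)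
    (hy : R ^ 2 ≤ 2 * (b - c) * (c - y)) :
    √(R ^ 2 + (c - y) ^ 2) ≤ dist (toLp 2 (x, y)) q := by
  refine Real.sqrt_le_iff.2 ⟨dist_nonneg, ?_⟩
  rw [dist_sq_eq_of_L2, toLp_fst, toLp_snd, sub_sq_comm y]
  rcases le_total (dist x q.fst) R with hxq | hxq
  · calc R ^ 2 + (c - y) ^ 2
        ≤ 2 * (b - c) * (c - y) + (c - y) ^ 2 := by gcongr
      _ ≤ (b - y) ^ 2 := by linarith [sq_nonneg (b - c)]
      _ ≤ (q.snd - y) ^ 2 := by gcongr; exacts [by linarith, hbq hxq]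
      _ ≤ dist x q.fst ^ 2 + (q.snd - y) ^ 2 := le_add_of_nonneg_left (sq_nonneg _)
  · gcongr

theorem eventually_atBot_infDist_lt_infDist {K L : Set (WithLp 2 (E × ℝ))}
    {p : WithLp 2 (E × ℝ)} (hp : p ∈ K) (hL : L.Nonempty) (hpL : ∀ q ∈ L, p.snd ≤ q.snd) {x : E}
    {R b : ℝ} (hR : dist x p.fst < R) (hb : p.snd < b)
    (hbL : ∀ q ∈ L, dist x q.fst ≤ R → b ≤ q.snd) :
    ∀ᶠ y in atBot, infDist (toLp 2 (x, y)) K < infDist (toLp 2 (x, y)) L := by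
  have hR₀ : 0 ≤ R := dist_nonneg.trans hR.le
  filter_upwards [eventually_le_atBot p.snd,
    eventually_le_atBot (p.snd - R ^ 2 / (2 * (b - p.snd)))] with y hyp hy
  have hgap : R ^ 2 ≤ 2 * (b - p.snd) * (p.snd - y) :=
    (div_le_iff₀' (by linarith)).1 (by linarith)
  calc infDist (toLp 2 (x, y)) K
      ≤ dist (toLp 2 (x, y)) p := infDist_le_dist_of_mem hp
    _ < √(R ^ 2 + (p.snd - y) ^ 2) := by
        refine Real.lt_sqrt_of_sq_lt ?_
        rw [dist_sq_eq_of_L2, toLp_fst, toLp_snd, sub_sq_comm y]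
        gcongr
    _ ≤ infDist (toLp 2 (x, y)) L := (le_infDist hL).2 fun q hq =>
        sqrt_le_dist_of_le_snd hR₀ hyp (hpL q hq) (hbL q hq) hb.le hgap

theorem infDist_l2Epigraph_le_infDist {f : E → ℝ} {x : E} {y : ℝ} (hy : f x ≤ y)
    (K : Set (WithLp 2 (E × ℝ))) :
    infDist (toLp 2 (x, y)) (l2Epigraph f) ≤ infDist (toLp 2 (x, y)) K :=
  (infDist_zero_of_mem (toLp_mem_l2Epigraph.2 hy)).trans_le infDist_nonneg

theorem eventually_atBot_infDist_lt_infDist_l2Epigraph [ProperSpace E] {f : E → ℝ}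
    (hf : LowerSemicontinuous f) {K : Set (WithLp 2 (E × ℝ))} {p : WithLp 2 (E × ℝ)} (hp : p ∈ K)
    (hpf : ∀ z, p.snd < f z) (x : E) :
    ∀ᶠ y in atBot, infDist (toLp 2 (x, y)) K < infDist (toLp 2 (x, y)) (l2Epigraph f) := by
  obtain ⟨b, hpb, hb⟩ := exists_gt_forall_le_of_lowerSemicontinuousOn
    (isCompact_closedBall x (dist x p.fst + 1)) (hf.lowerSemicontinuousOn _) fun z _ => hpf z
  refine eventually_atBot_infDist_lt_infDist hp ⟨_, toLp_mem_l2Epigraph.2 (le_refl (f x))⟩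
    (fun q hq => (hpf q.fst).le.trans hq) (lt_add_one _) hpb fun q hq hxq => ?_
  exact (hb q.fst (mem_closedBall'.2 hxq)).trans hq

/-- `G` is the value at `x` of the equidistant function of `K` and `L`: the point of height `G` is
the only one on the vertical line over `x` that is equidistant from `K` and `L`. Existence and
uniqueness are encoded together, by an equivalence. -/
def IsEquidistantValue (K L : Set (WithLp 2 (E × ℝ))) (x : E) (G : ℝ) : Prop :=
  ∀ y : ℝ, infDist (toLp 2 (x, y)) K = infDist (toLp 2 (x, y)) L ↔ y = G

end VerticalLine

theorem stmt3_general {E : Type*} [PseudoMetricSpace E] [ProperSpace E] {f : E → ℝ}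
    (hf : LowerSemicontinuous f) {K : Set (WithLp 2 (E × ℝ))} {p : WithLp 2 (E × ℝ)} (hp : p ∈ K)
    (hpf : ∀ z, p.snd < f z) {x : E} {G : ℝ} (hG : IsEquidistantValue K (l2Epigraph f) x G)
    (y : ℝ) :
    (infDist (toLp 2 (x, y)) K < infDist (toLp 2 (x, y)) (l2Epigraph f) ↔ y < G) ∧
      (infDist (toLp 2 (x, y)) (l2Epigraph f) < infDist (toLp 2 (x, y)) K ↔ G < y) := by
  obtain ⟨u, hu, huG⟩ := ((eventually_atBot_infDist_lt_infDist_l2Epigraph hf hp hpf x).and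
    (eventually_lt_atBot G)).exists
  obtain ⟨v, hv, hGv⟩ := ((eventually_ge_atTop (f x)).and (eventually_gt_atTop G)).exists
  exact lt_iff_lt_and_lt_iff_lt_of_forall_eq_iff (continuous_infDist_toLp K x)
    (continuous_infDist_toLp _ x) hG ⟨u, huG, hu.le⟩
    ⟨v, hGv, infDist_l2Epigraph_le_infDist hv K⟩ y

theorem stmt3 {n : ℕ} (f : EuclideanSpace ℝ (Fin n) → ℝ) (hf : Continuous f)
    (hfpos : ∀ x, 0 < f x)
    (L : Set (EucProd n)) (hL : L = epigraph f)
    (K : Set (EucProd n)) (hKcl : IsClosed K) (hKne : K.Nonempty)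
    (hdisj : K ∩ L = ∅)
    (x₀ : EuclideanSpace ℝ (Fin n)) (y₀ : ℝ) (hx₀ : pt x₀ y₀ ∈ K) (hy₀ : y₀ ≤ 0)
    (x : EuclideanSpace ℝ (Fin n)) (Gx : ℝ)
    (hGx : Metric.infDist (pt x Gx) K = Metric.infDist (pt x Gx) L)
    (huniq : ∀ y : ℝ, Metric.infDist (pt x y) K = Metric.infDist (pt x y) L → y = Gx) :
    ∀ y : ℝ,
      (Metric.infDist (pt x y) K < Metric.infDist (pt x y) L → y < Gx) ∧
      (Metric.infDist (pt x y) L < Metric.infDist (pt x y) K → Gx < y) := by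
  subst hL
  exact fun y => (stmt3_general hf.lowerSemicontinuous hx₀ (fun z => hy₀.trans_lt (hfpos z))
    (fun z => ⟨huniq z, fun h => h ▸ hGx⟩) y).imp Iff.mp Iff.mp

end
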